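/- Let u be a smooth positive solution of the heat equation ∂u/∂t = Δu on U × (0,T), where U ⊆ ℝⁿ is open. Define the symmetric matrix Υ = ∇²u + (u/(2t)) I - (∇u ⊗ ∇u)/u and its trace Q = tr Υ = u( Δ log u + n/(2t) ). Then on U × (0,T) one has the identity (∂/∂t - Δ) Q = (2/u) ‖Υ‖²_F - (2/t) Q, where ‖·‖_F is the Frobenius norm. -/

import Mathlib

open Real MeasureTheory Filter Set

/-- `i`-th partial derivative of `f : ℝⁿ → ℝ`. -/
noncomputable def pdv {n : ℕ} (i : Fin n) (f : EuclideanSpace ℝ (Fin n) → ℝ)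
    (y : EuclideanSpace ℝ (Fin n)) : ℝ :=
  fderiv ℝ f y (EuclideanSpace.single i 1)

/-- `(i,j)` entry of the Hessian of `f : ℝⁿ → ℝ`. -/
noncomputable def hess {n : ℕ} (i j : Fin n) (f : EuclideanSpace ℝ (Fin n) → ℝ)
    (y : EuclideanSpace ℝ (Fin n)) : ℝ :=
  pdv i (pdv j f) y

/-- Euclidean Laplacian (trace of the Hessian) of `f : ℝⁿ → ℝ`. -/
noncomputable def lap {n : ℕ} (f : EuclideanSpace ℝ (Fin n) → ℝ)
    (y : EuclideanSpace ℝ (Fin n)) : ℝ :=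
  ∑ i, hess i i f y

section Aux
variable {V : Type*} [NormedAddCommGroup V] [NormedSpace ℝ V]

noncomputable def DD (v : V) (f : V → ℝ) (p : V) : ℝ := fderiv ℝ f p v

def Sm (Ω : Set V) (f : V → ℝ) : Prop := ContDiffOn ℝ (⊤ : ℕ∞) f Ω

variable {Ω : Set V} {f g : V → ℝ} {p : V}

theorem Sm.diff (hf : Sm Ω f) (hΩ : IsOpen Ω) (hp : p ∈ Ω) : DifferentiableAt ℝ f p :=
  (ContDiffOn.differentiableOn hf (by simp)).differentiableAt (hΩ.mem_nhds hp)

theorem Sm.DD (hf : Sm Ω f) (hΩ : IsOpen Ω) (v : V) : Sm Ω (DD v f) := by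
  have h : ContDiffOn ℝ (⊤ : ℕ∞) (fderiv ℝ f) Ω :=
    ContDiffOn.fderiv_of_isOpen hf hΩ (by simp)
  exact h.clm_apply contDiffOn_const

theorem DD_congr (hΩ : IsOpen Ω) (h : Set.EqOn f g Ω) (v : V) :
    Set.EqOn (DD v f) (DD v g) Ω := by
  intro p hp
  have : f =ᶠ[nhds p] g := h.eventuallyEq_of_mem (hΩ.mem_nhds hp)
  simp only [DD, this.fderiv_eq]

theorem DD_add (hΩ : IsOpen Ω) (hf : Sm Ω f) (hg : Sm Ω g) (v : V) :
    Set.EqOn (DD v (fun x => f x + g x)) (fun x => DD v f x + DD v g x) Ω := by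
  intro p hp
  simp [DD, fderiv_fun_add (hf.diff hΩ hp) (hg.diff hΩ hp)]

theorem DD_sub (hΩ : IsOpen Ω) (hf : Sm Ω f) (hg : Sm Ω g) (v : V) :
    Set.EqOn (DD v (fun x => f x - g x)) (fun x => DD v f x - DD v g x) Ω := by
  intro p hp
  simp [DD, fderiv_fun_sub (hf.diff hΩ hp) (hg.diff hΩ hp)]

theorem DD_mul (hΩ : IsOpen Ω) (hf : Sm Ω f) (hg : Sm Ω g) (v : V) :
    Set.EqOn (DD v (fun x => f x * g x)) (fun x => f x * DD v g x + DD v f x * g x) Ω := by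
  intro p hp
  simp [DD, fderiv_fun_mul (hf.diff hΩ hp) (hg.diff hΩ hp)]
  ring

theorem DD_sum {ι : Type*} (s : Finset ι) {f : ι → V → ℝ} (hΩ : IsOpen Ω)
    (hf : ∀ i, Sm Ω (f i)) (v : V) :
    Set.EqOn (DD v (fun x => ∑ i ∈ s, f i x)) (fun x => ∑ i ∈ s, DD v (f i) x) Ω := by
  intro p hp
  simp [DD, fderiv_fun_sum (fun i _ => (hf i).diff hΩ hp)]

theorem DD_const (c : ℝ) (v : V) : DD v (fun _ : V => c) = fun _ => 0 := by
  funext p; simp [DD]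

theorem DD_comm (hΩ : IsOpen Ω) (hf : Sm Ω f) (v w : V) :
    Set.EqOn (DD v (DD w f)) (DD w (DD v f)) Ω := by
  intro p hp
  have h : ContDiffOn ℝ (⊤ : ℕ∞) (fderiv ℝ f) Ω :=
    ContDiffOn.fderiv_of_isOpen hf hΩ (by simp)
  have hd : DifferentiableAt ℝ (fderiv ℝ f) p :=
    (h.differentiableOn (by simp)).differentiableAt (hΩ.mem_nhds hp)
  have key : ∀ a b : V, DD a (DD b f) p = fderiv ℝ (fderiv ℝ f) p a b := by
    intro a b
    have : HasFDerivAt (fun x => fderiv ℝ f x b) _ p :=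
      hd.hasFDerivAt.clm_apply (hasFDerivAt_const b p)
    change fderiv ℝ (fun x => fderiv ℝ f x b) p a = _
    rw [this.fderiv]; simp
  rw [key, key]
  have hc : ContDiffAt ℝ (⊤ : ℕ∞) f p := ContDiffOn.contDiffAt hf (hΩ.mem_nhds hp)
  exact (hc.isSymmSndFDerivAt (by simp only [minSmoothness_of_isRCLikeNormedField]; exact WithTop.coe_le_coe.2 le_top)) v w

theorem Sm.add (hf : Sm Ω f) (hg : Sm Ω g) : Sm Ω (fun x => f x + g x) := ContDiffOn.add hf hg
theorem Sm.sub (hf : Sm Ω f) (hg : Sm Ω g) : Sm Ω (fun x => f x - g x) := ContDiffOn.sub hf hg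
theorem Sm.mul (hf : Sm Ω f) (hg : Sm Ω g) : Sm Ω (fun x => f x * g x) := ContDiffOn.mul hf hg
theorem Sm.sum {ι : Type*} {s : Finset ι} {f : ι → V → ℝ} (hf : ∀ i, Sm Ω (f i)) :
    Sm Ω (fun x => ∑ i ∈ s, f i x) := ContDiffOn.sum (fun i _ => hf i)
theorem Sm.const (c : ℝ) : Sm Ω (fun _ => c) := contDiffOn_const

/-- heat operator -/
noncomputable def LL {n : ℕ} (e : Fin n → V) (τ : V) (f : V → ℝ) (p : V) : ℝ :=
  DD τ f p - ∑ k, DD (e k) (DD (e k) f) p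

variable {n : ℕ} (e : Fin n → V) (τ : V)

theorem LL_congr (hΩ : IsOpen Ω) (h : Set.EqOn f g Ω) :
    Set.EqOn (LL e τ f) (LL e τ g) Ω := by
  intro p hp
  simp only [LL, DD_congr hΩ h τ hp]
  congr 1
  exact Finset.sum_congr rfl fun k _ => DD_congr hΩ (DD_congr hΩ h (e k)) (e k) hp

theorem LL_add (hΩ : IsOpen Ω) (hf : Sm Ω f) (hg : Sm Ω g) :
    Set.EqOn (LL e τ (fun x => f x + g x)) (fun x => LL e τ f x + LL e τ g x) Ω := by
  intro p hp
  have : ∀ k, DD (e k) (DD (e k) (fun x => f x + g x)) p =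
      DD (e k) (DD (e k) f) p + DD (e k) (DD (e k) g) p := fun k => by
    rw [DD_congr hΩ (DD_add hΩ hf hg (e k)) (e k) hp,
      DD_add hΩ (hf.DD hΩ _) (hg.DD hΩ _) (e k) hp]
  simp only [LL, DD_add hΩ hf hg τ hp, this, Finset.sum_add_distrib]
  ring

theorem LL_mul (hΩ : IsOpen Ω) (hf : Sm Ω f) (hg : Sm Ω g) :
    Set.EqOn (LL e τ (fun x => f x * g x))
      (fun x => f x * LL e τ g x + g x * LL e τ f x - 2 * ∑ k, DD (e k) f x * DD (e k) g x) Ω := by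
  intro p hp
  have : ∀ k, DD (e k) (DD (e k) (fun x => f x * g x)) p =
      f p * DD (e k) (DD (e k) g) p + g p * DD (e k) (DD (e k) f) p
      + 2 * (DD (e k) f p * DD (e k) g p) := fun k => by
    rw [DD_congr hΩ (DD_mul hΩ hf hg (e k)) (e k) hp,
      DD_add hΩ (hf.mul (hg.DD hΩ _)) ((hf.DD hΩ _).mul hg) (e k) hp]
    simp only [DD_mul hΩ hf (hg.DD hΩ (e k)) (e k) hp, DD_mul hΩ (hf.DD hΩ (e k)) hg (e k) hp]
    ring
  simp only [LL, DD_mul hΩ hf hg τ hp, this, Finset.sum_add_distrib, ← Finset.mul_sum]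
  ring

theorem LL_const (c : ℝ) : LL e τ (fun _ => c) = fun _ => 0 := by
  funext p
  simp [LL, DD_const]

theorem LL_sum {ι : Type*} (s : Finset ι) {f : ι → V → ℝ} (hΩ : IsOpen Ω)
    (hf : ∀ i, Sm Ω (f i)) :
    Set.EqOn (LL e τ (fun x => ∑ i ∈ s, f i x)) (fun x => ∑ i ∈ s, LL e τ (f i) x) Ω := by
  classical
  induction s using Finset.induction_on with
  | empty => intro p _; simp [LL_const]
  | insert a s ha ih =>
    intro p hp
    simp only [Finset.sum_insert ha]
    rw [LL_add e τ hΩ (hf a) (Sm.sum hf) hp]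
    simp only [ih hp]

theorem LL_DD (hΩ : IsOpen Ω) (hf : Sm Ω f) (v : V) :
    Set.EqOn (LL e τ (DD v f)) (DD v (LL e τ f)) Ω := by
  intro p hp
  have h1 : DD v (LL e τ f) p = DD v (DD τ f) p - ∑ k, DD v (DD (e k) (DD (e k) f)) p := by
    have := DD_sub hΩ (hf.DD hΩ τ) (Sm.sum (s := Finset.univ)
      (f := fun k => DD (e k) (DD (e k) f)) fun k => (hf.DD hΩ (e k)).DD hΩ (e k)) v hp
    simp only [DD_sum Finset.univ hΩ (f := fun k => DD (e k) (DD (e k) f))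
      (fun k => (hf.DD hΩ (e k)).DD hΩ (e k)) v hp] at this
    exact this
  rw [h1, LL, DD_comm hΩ hf τ v hp]
  congr 1
  refine Finset.sum_congr rfl fun k _ => ?_
  rw [DD_congr hΩ (DD_comm hΩ hf (e k) v) (e k) hp, DD_comm hΩ (hf.DD hΩ (e k)) (e k) v hp]

/-- the main computation -/
theorem main_LL (hΩ : IsOpen Ω) (hf : Sm Ω f) {w r : V → ℝ} (hw : Sm Ω w) (hr : Sm Ω r)
    (hwf : ∀ p ∈ Ω, w p * f p = 1) (hL : ∀ p ∈ Ω, LL e τ f p = 0)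
    (hrt : ∀ p ∈ Ω, DD τ r p = - 2 * r p ^ 2) (hre : ∀ k, ∀ p ∈ Ω, DD (e k) r p = 0)
    (hp : p ∈ Ω) :
    LL e τ (fun x => ∑ i, (DD (e i) (DD (e i) f) x + f x * r x
      - w x * (DD (e i) f x * DD (e i) f x))) p
    = 2 * w p * (∑ i, ∑ j, (DD (e i) (DD (e j) f) p + f p * r p * (if i = j then 1 else 0)
        - w p * (DD (e i) f p * DD (e j) f p)) ^ 2)
      - 4 * r p * (∑ i, (DD (e i) (DD (e i) f) p + f p * r p
      - w p * (DD (e i) f p * DD (e i) f p))) := by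
  have hLD : ∀ v, ∀ p ∈ Ω, LL e τ (DD v f) p = 0 := fun v p hp => by
    rw [LL_DD e τ hΩ hf v hp, DD_congr hΩ (g := fun _ => 0) hL v hp, DD_const]
  have hLDD : ∀ v, ∀ p ∈ Ω, LL e τ (DD v (DD v f)) p = 0 := fun v p hp => by
    rw [LL_DD e τ hΩ (hf.DD hΩ v) v hp, DD_congr hΩ (g := fun _ => 0) (hLD v) v hp, DD_const]
  have hLr : LL e τ r p = - 2 * r p ^ 2 := by
    simp only [LL, hrt p hp]
    rw [Finset.sum_eq_zero, sub_zero]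
    intro k _
    rw [DD_congr hΩ (g := fun _ => 0) (hre k) (e k) hp, DD_const]
  have hDw : ∀ k, DD (e k) w p = - DD (e k) f p * w p ^ 2 := fun k => by
    have h := DD_congr hΩ (g := fun _ => 1) hwf (e k) hp
    rw [DD_const, DD_mul hΩ hw hf (e k) hp] at h
    simp only at h
    linear_combination w p * h - DD (e k) w p * hwf p hp
  have hLw : LL e τ w p = -2 * w p ^ 3 * ∑ k, DD (e k) f p ^ 2 := by
    have h := LL_congr e τ hΩ (g := fun _ => 1) hwf hp
    rw [LL_const, LL_mul e τ hΩ hw hf hp] at h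
    simp only [hL p hp, hDw] at h
    have : ∑ k, -DD (e k) f p * w p ^ 2 * DD (e k) f p = - w p ^ 2 * ∑ k, DD (e k) f p ^ 2 := by
      rw [Finset.mul_sum]; exact Finset.sum_congr rfl fun k _ => by ring
    rw [this] at h
    linear_combination w p * h - LL e τ w p * hwf p hp
  have s2 : ∀ i, Sm Ω (DD (e i) (DD (e i) f)) := fun i => (hf.DD hΩ _).DD hΩ _
  have s1 : ∀ i, Sm Ω (DD (e i) f) := fun i => (hf.DD hΩ _)
  have s3 : ∀ i, Sm Ω (fun x => w x * (DD (e i) f x * DD (e i) f x)) :=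
    fun i => hw.mul ((s1 i).mul (s1 i))
  have hterm : ∀ i, LL e τ (fun x => DD (e i) (DD (e i) f) x + f x * r x
      - w x * (DD (e i) f x * DD (e i) f x)) p =
      - 2 * f p * r p ^ 2 + 2 * w p * (∑ k, DD (e k) (DD (e i) f) p ^ 2)
      + DD (e i) f p ^ 2 * (2 * w p ^ 3 * ∑ k, DD (e k) f p ^ 2)
      - 4 * w p ^ 2 * ∑ k, DD (e k) f p * DD (e i) f p * DD (e k) (DD (e i) f) p := by
    intro i
    have e1 : (fun x => DD (e i) (DD (e i) f) x + f x * r x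
      - w x * (DD (e i) f x * DD (e i) f x)) = fun x => DD (e i) (DD (e i) f) x + (f x * r x
      + (-1) * (w x * (DD (e i) f x * DD (e i) f x))) := by funext x; ring
    rw [e1, LL_add e τ hΩ (s2 i) ((hf.mul hr).add ((Sm.const (-1)).mul (s3 i))) hp]
    simp only [LL_add e τ hΩ (hf.mul hr) ((Sm.const (-1)).mul (s3 i)) hp,
      LL_mul e τ hΩ hf hr hp, LL_mul e τ hΩ (Sm.const (-1)) (s3 i) hp, LL_const, DD_const,
      LL_mul e τ hΩ hw ((s1 i).mul (s1 i)) hp, LL_mul e τ hΩ (s1 i) (s1 i) hp, hLDD _ p hp,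
      hLD _ p hp, hL p hp, hre _ p hp, hLr, hLw, hDw, DD_mul hΩ (s1 i) (s1 i) _ hp]
    have a1 : ∑ k, DD (e k) (DD (e i) f) p * DD (e k) (DD (e i) f) p
        = ∑ k, DD (e k) (DD (e i) f) p ^ 2 := Finset.sum_congr rfl fun k _ => by ring
    have a2 : ∑ k, -DD (e k) f p * w p ^ 2 * (DD (e i) f p * DD (e k) (DD (e i) f) p
        + DD (e k) (DD (e i) f) p * DD (e i) f p) = - 2 * w p ^ 2 *
        ∑ k, DD (e k) f p * DD (e i) f p * DD (e k) (DD (e i) f) p := by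
      rw [Finset.mul_sum]; exact Finset.sum_congr rfl fun k _ => by ring
    rw [a1, a2]
    simp
    ring
  rw [LL_sum e τ Finset.univ hΩ (fun i => ((s2 i).add (hf.mul hr)).sub (s3 i)) hp]
  simp only [hterm]
  have hsq : ∀ i, ∑ j, (DD (e i) (DD (e j) f) p + f p * r p * (if i = j then 1 else 0)
        - w p * (DD (e i) f p * DD (e j) f p)) ^ 2 =
      ∑ k, DD (e k) (DD (e i) f) p ^ 2 + 2 * (f p * r p) * DD (e i) (DD (e i) f) p
      + (f p * r p) ^ 2 + w p ^ 2 * DD (e i) f p ^ 2 * ∑ k, DD (e k) f p ^ 2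
      - 2 * w p * ∑ k, DD (e k) f p * DD (e i) f p * DD (e k) (DD (e i) f) p
      - 2 * (f p * r p) * w p * DD (e i) f p ^ 2 := by
    intro i
    have hdelta : ∀ c : Fin n → ℝ, c i = ∑ j, if i = j then c j else 0 := by
      intro c; simp
    have e1 := hdelta (fun j => 2 * (f p * r p) * DD (e i) (DD (e j) f) p + (f p * r p) ^ 2
      - 2 * (f p * r p) * w p * (DD (e i) f p * DD (e j) f p))
    have e2 : ∑ k, DD (e k) (DD (e i) f) p ^ 2 + 2 * (f p * r p) * DD (e i) (DD (e i) f) p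
      + (f p * r p) ^ 2 + w p ^ 2 * DD (e i) f p ^ 2 * ∑ k, DD (e k) f p ^ 2
      - 2 * w p * ∑ k, DD (e k) f p * DD (e i) f p * DD (e k) (DD (e i) f) p
      - 2 * (f p * r p) * w p * DD (e i) f p ^ 2 =
      ∑ k, DD (e k) (DD (e i) f) p ^ 2 + w p ^ 2 * DD (e i) f p ^ 2 * ∑ k, DD (e k) f p ^ 2
      - 2 * w p * ∑ k, DD (e k) f p * DD (e i) f p * DD (e k) (DD (e i) f) p
      + (2 * (f p * r p) * DD (e i) (DD (e i) f) p + (f p * r p) ^ 2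
      - 2 * (f p * r p) * w p * (DD (e i) f p * DD (e i) f p)) := by ring
    rw [e2, e1, Finset.mul_sum, Finset.mul_sum, ← Finset.sum_add_distrib,
      ← Finset.sum_sub_distrib, ← Finset.sum_add_distrib]
    refine Finset.sum_congr rfl fun j _ => ?_
    rw [DD_comm hΩ hf (e j) (e i) hp]
    split_ifs <;> ring
  simp only [hsq]
  rw [Finset.mul_sum Finset.univ _ (2 * w p), Finset.mul_sum Finset.univ _ (4 * r p),
    ← Finset.sum_sub_distrib]
  refine Finset.sum_congr rfl fun i _ => ?_
  have := hwf p hp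
  linear_combination (- 4 * r p * DD (e i) (DD (e i) f) p - 2 * r p ^ 2 * f p 
    + 4 * r p * w p * DD (e i) f p ^ 2) * this

end Aux

section Bridge
variable {n : ℕ}

theorem pdv_eq {U : Set (EuclideanSpace ℝ (Fin n))} {I : Set ℝ} (hU : IsOpen U) (hI : IsOpen I)
    {g : EuclideanSpace ℝ (Fin n) → ℝ → ℝ} {G : EuclideanSpace ℝ (Fin n) × ℝ → ℝ}
    (hG : Sm (U ×ˢ I) G) (h : ∀ y ∈ U, ∀ t ∈ I, g y t = G (y, t)) (i : Fin n) :
    ∀ y ∈ U, ∀ t ∈ I, pdv i (fun z => g z t) y = DD (EuclideanSpace.single i 1, 0) G (y, t) := by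
  intro y hy t ht
  have h1 : (fun z => g z t) =ᶠ[nhds y] fun z => G (z, t) := by
    filter_upwards [hU.mem_nhds hy] with z hz using h z hz t ht
  have hd := (hG.diff (hU.prod hI) (p := (y, t)) ⟨hy, ht⟩).hasFDerivAt
  have h2 : HasFDerivAt (fun z => G (z, t)) _ y :=
    HasFDerivAt.comp y hd (hasFDerivAt_prodMk_left y t)
  rw [pdv, h1.fderiv_eq, h2.fderiv]
  simp [DD]

theorem tderiv_eq {U : Set (EuclideanSpace ℝ (Fin n))} {I : Set ℝ} (hU : IsOpen U) (hI : IsOpen I)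
    {g : EuclideanSpace ℝ (Fin n) → ℝ → ℝ} {G : EuclideanSpace ℝ (Fin n) × ℝ → ℝ}
    (hG : Sm (U ×ˢ I) G) (h : ∀ y ∈ U, ∀ t ∈ I, g y t = G (y, t)) :
    ∀ y ∈ U, ∀ t ∈ I, deriv (fun s => g y s) t = DD (0, 1) G (y, t) := by
  intro y hy t ht
  have h1 : (fun s => g y s) =ᶠ[nhds t] fun s => G (y, s) := by
    filter_upwards [hI.mem_nhds ht] with s hs using h y hy s hs
  have hd := (hG.diff (hU.prod hI) (p := (y, t)) ⟨hy, ht⟩).hasFDerivAt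
  have h2 : HasFDerivAt (fun s => G (y, s)) _ t :=
    HasFDerivAt.comp t hd (hasFDerivAt_prodMk_right y t)
  rw [h1.deriv_eq, ← fderiv_apply_one_eq_deriv, h2.fderiv]
  simp [DD]

theorem hess_eq {U : Set (EuclideanSpace ℝ (Fin n))} {I : Set ℝ} (hU : IsOpen U) (hI : IsOpen I)
    {g : EuclideanSpace ℝ (Fin n) → ℝ → ℝ} {G : EuclideanSpace ℝ (Fin n) × ℝ → ℝ}
    (hG : Sm (U ×ˢ I) G) (h : ∀ y ∈ U, ∀ t ∈ I, g y t = G (y, t)) (i j : Fin n) :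
    ∀ y ∈ U, ∀ t ∈ I, hess i j (fun z => g z t) y =
      DD (EuclideanSpace.single i 1, 0) (DD (EuclideanSpace.single j 1, 0) G) (y, t) :=
  pdv_eq hU hI (g := fun y t => pdv j (fun z => g z t) y) (hG.DD (hU.prod hI) _)
    (pdv_eq hU hI hG h j) i

end Bridge

/-- Flat-space evolution identity for the Li–Yau quantity: with
`Υ = ∇²u + (u/(2t)) I - (∇u ⊗ ∇u)/u` and `Q = tr Υ = u(Δ log u + n/(2t))`,
one has `(∂/∂t - Δ) Q = (2/u) ‖Υ‖²_F - (2/t) Q`. -/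
theorem stmt6 (n : ℕ) (U : Set (EuclideanSpace ℝ (Fin n))) (hU : IsOpen U)
    (T : ℝ) (u : EuclideanSpace ℝ (Fin n) → ℝ → ℝ)
    (hsmooth : ContDiffOn ℝ (⊤ : ℕ∞) (fun p : (EuclideanSpace ℝ (Fin n)) × ℝ => u p.1 p.2)
      (U ×ˢ Set.Ioo 0 T))
    (hpos : ∀ y ∈ U, ∀ t ∈ Set.Ioo (0 : ℝ) T, 0 < u y t)
    (hheat : ∀ y ∈ U, ∀ t ∈ Set.Ioo (0 : ℝ) T,
      deriv (fun s => u y s) t = lap (fun z => u z t) y)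
    (Υ : EuclideanSpace ℝ (Fin n) → ℝ → Fin n → Fin n → ℝ)
    (hΥ : ∀ y t i j, Υ y t i j
      = hess i j (fun z => u z t) y + (u y t / (2 * t)) * (if i = j then 1 else 0)
        - pdv i (fun z => u z t) y * pdv j (fun z => u z t) y / u y t)
    (Q : EuclideanSpace ℝ (Fin n) → ℝ → ℝ)
    (hQ : ∀ y t, Q y t = ∑ i, Υ y t i i) :
    ∀ y ∈ U, ∀ t ∈ Set.Ioo (0 : ℝ) T,
      (Q y t = u y t * (lap (fun z => Real.log (u z t)) y + n / (2 * t)))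
      ∧ deriv (fun s => Q y s) t - lap (fun z => Q z t) y
          = (2 / u y t) * (∑ i, ∑ j, (Υ y t i j) ^ 2) - (2 / t) * Q y t := by
  set e : Fin n → EuclideanSpace ℝ (Fin n) × ℝ := fun i => (EuclideanSpace.single i 1, 0) with he
  set I : Set ℝ := Set.Ioo 0 T with hIdef
  have hI : IsOpen I := isOpen_Ioo
  have hΩ : IsOpen (U ×ˢ I) := hU.prod hI
  set F : EuclideanSpace ℝ (Fin n) × ℝ → ℝ := fun p => u p.1 p.2 with hF
  have sF : Sm (U ×ˢ I) F := hsmooth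
  have Fne : ∀ p ∈ U ×ˢ I, F p ≠ 0 := fun p hp => (hpos p.1 hp.1 p.2 hp.2).ne'
  have tne : ∀ p ∈ U ×ˢ I, 2 * p.2 ≠ 0 := fun p hp => by
    have : 0 < p.2 := hp.2.1
    positivity
  set w : EuclideanSpace ℝ (Fin n) × ℝ → ℝ := fun p => (F p)⁻¹ with hw
  set r : EuclideanSpace ℝ (Fin n) × ℝ → ℝ := fun p => (2 * p.2)⁻¹ with hr
  have sw : Sm (U ×ˢ I) w := ContDiffOn.inv sF Fne
  have sr : Sm (U ×ˢ I) r :=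
    ContDiffOn.inv (contDiffOn_const.mul contDiff_snd.contDiffOn) tne
  have hwf : ∀ p ∈ U ×ˢ I, w p * F p = 1 := fun p hp => inv_mul_cancel₀ (Fne p hp)
  have hu : ∀ y ∈ U, ∀ t ∈ I, u y t = F (y, t) := fun _ _ _ _ => rfl
  have hp1 := pdv_eq hU hI sF hu
  have hp2 := hess_eq hU hI sF hu
  have hL : ∀ p ∈ U ×ˢ I, LL e (0, 1) F p = 0 := by
    rintro ⟨y, t⟩ ⟨hy, ht⟩
    have := hheat y hy t ht
    rw [tderiv_eq hU hI sF hu y hy t ht, lap] at this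
    simp only [hp2 _ _ y hy t ht] at this
    rw [LL, this]; simp [he]
  have hDr : ∀ p ∈ U ×ˢ I, ∀ v, DD v r p = -2 * r p ^ 2 * v.2 := by
    intro p hp v
    have h1 : HasFDerivAt (fun p : EuclideanSpace ℝ (Fin n) × ℝ => 2 * p.2) _ p :=
      (hasFDerivAt_snd (𝕜 := ℝ) (p := p)).const_mul 2
    have h2 : HasFDerivAt r _ p := (hasDerivAt_inv (tne p hp)).comp_hasFDerivAt p h1
    rw [DD, h2.fderiv]
    simp [hr]
    ring
  have hΥ' : ∀ y ∈ U, ∀ t ∈ I, ∀ i j, Υ y t i j = DD (e i) (DD (e j) F) (y, t)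
      + F (y, t) * r (y, t) * (if i = j then 1 else 0)
      - w (y, t) * (DD (e i) F (y, t) * DD (e j) F (y, t)) := by
    intro y hy t ht i j
    rw [hΥ, hp2 _ _ y hy t ht, hp1 _ y hy t ht, hp1 _ y hy t ht]
    simp only [hw, hr, hF, he, div_eq_mul_inv]
    ring
  set G : EuclideanSpace ℝ (Fin n) × ℝ → ℝ := fun x => ∑ i, (DD (e i) (DD (e i) F) x + F x * r x
      - w x * (DD (e i) F x * DD (e i) F x)) with hG
  have hQG : ∀ y ∈ U, ∀ t ∈ I, Q y t = G (y, t) := by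
    intro y hy t ht
    rw [hQ]
    simp only [hΥ' y hy t ht, hG, if_true, mul_one]
  have s1 : ∀ i, Sm (U ×ˢ I) (DD (e i) F) := fun i => sF.DD hΩ _
  have sG : Sm (U ×ˢ I) G := Sm.sum fun i =>
    (((s1 i).DD hΩ _).add (sF.mul sr)).sub (sw.mul ((s1 i).mul (s1 i)))
  intro y hy t ht
  have hp : (y, t) ∈ U ×ˢ I := ⟨hy, ht⟩
  have hDw : ∀ k, DD (e k) w (y, t) = - DD (e k) F (y, t) * w (y, t) ^ 2 := fun k => by
    have h := DD_congr hΩ (g := fun _ => 1) hwf (e k) hp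
    rw [DD_const, DD_mul hΩ sw sF (e k) hp] at h
    simp only at h
    linear_combination w (y, t) * h - DD (e k) w (y, t) * hwf _ hp
  constructor
  · have slog : Sm (U ×ˢ I) (fun p => Real.log (F p)) := ContDiffOn.log sF Fne
    have hlog := hess_eq hU hI slog (g := fun y t => Real.log (u y t)) (fun _ _ _ _ => rfl)
    have hD1 : ∀ v, Set.EqOn (DD v (fun p => Real.log (F p))) (fun p => w p * DD v F p)
        (U ×ˢ I) := by
      intro v p hp
      have := ((sF.diff hΩ hp).hasFDerivAt.log (Fne p hp)).fderiv
      simp [DD, this, hw]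
    rw [hQG y hy t ht, lap]
    simp only [hlog _ _ y hy t ht]
    have h2 : ∀ i, DD (e i) (DD (e i) (fun p => Real.log (F p))) (y, t) =
        w (y, t) * DD (e i) (DD (e i) F) (y, t) - DD (e i) F (y, t) ^ 2 * w (y, t) ^ 2 := by
      intro i
      rw [DD_congr hΩ (hD1 (e i)) (e i) hp, DD_mul hΩ sw (s1 i) (e i) hp]
      simp only [hDw]
      ring
    have h3 : (n : ℝ) / (2 * t) = ∑ i : Fin n, r (y, t) := by
      simp [hr, div_eq_mul_inv]
    change G (y, t) = F (y, t) * (∑ i, DD (e i) (DD (e i) (fun p => Real.log (F p))) (y, t) + _)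
    rw [h3, ← Finset.sum_add_distrib, Finset.mul_sum]
    refine Finset.sum_congr rfl fun i _ => ?_
    rw [h2]
    linear_combination (- DD (e i) (DD (e i) F) (y, t)
      + w (y, t) * DD (e i) F (y, t) ^ 2) * hwf _ hp
  · have key := main_LL e (0, 1) hΩ sF sw sr hwf hL
      (fun p hp => by rw [hDr p hp]; simp) (fun k p hp => by rw [hDr p hp]; simp [he]) hp
    have hl : deriv (fun s => Q y s) t - lap (fun z => Q z t) y = LL e (0, 1) G (y, t) := by
      rw [tderiv_eq hU hI sG hQG y hy t ht, lap]
      simp only [hess_eq hU hI sG hQG _ _ y hy t ht]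
      rfl
    rw [hl, key, hQG y hy t ht]
    simp only [hΥ' y hy t ht]
    have e1 : 2 / u y t = 2 * w (y, t) := by simp [hw, hF, div_eq_mul_inv]
    have e2 : 2 / t = 4 * r (y, t) := by simp only [hr, mul_inv, div_eq_mul_inv]; ring
    rw [e1, e2]
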